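/- For every 0 < ε < 1 there exist η > 0 (sufficiently small in terms of ε) and C > 0 (sufficiently large in terms of η) such that, for p ≥ C log n / n, the binomial random graph G = G_{n,p} asymptotically almost surely satisfies the following: for every subgraph G' of G, every path P' on V, every longest path P = v_1…v_ℓ in G' ∪ P', and every set A ⊆ R^{η log n}_{G',P,v_ℓ} with |A| ≥ εn/100, we have |R_{G',P,v_ℓ}(A)| ≥ p^{-1} δ_{G'}(A) − εn/10. -/

import Mathlib

/-!
Each rotation destroys at most two adjacencies of the original path `P`, so after `t` rotations
the path `P_a` passes all but `2 * t + 2` vertices of `P` between the same two neighbours as on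
`P`. Cut `P` into `k = K * (t + 1)` blocks of about `n / k` consecutive vertices. A block without
such a deviating vertex is passed by `P_a` in a single direction. If it contains a `G'`-neighbour
`b` of `a`, the vertex before `b` on `P_a` is the predecessor or, against the direction of `P`, the
successor of `b` on `P`; it lies in `R(A)` because `b` is an admissible pivot. Hence, given `P`, `A`
and `R(A)`, the types of the `k` blocks for each `a ∈ A` determine a set `S` of pairs that covers
all edges of `G'` leaving `A` and has at most `|A| * (|R(A)| + O(n / K + t))` elements. Only
`2 ^ O(k * n)` sets arise in this way.

As `k = O(log n)`, for `p ≥ C * log n / n` a Chernoff bound survives the union over this family: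
a.a.s. `G` has at most `p * |S| + γ * p * n ^ 2` adjacent pairs in every such `S`. There are at
least `|A| * δ(A)` of them, and dividing by `p * |A|` gives the claim.
-/

open Filter Real

namespace Resilience

variable {V : Type*}

/-- The degree of a vertex, as the cardinality of its neighbourhood. -/
noncomputable def deg (G : SimpleGraph V) (v : V) : ℕ := (G.neighborSet v).ncard

/-- The neighbourhood of a set of vertices: all vertices with a neighbour in `X`. -/
def nbhd (G : SimpleGraph V) (X : Set V) : Set V := {v | ∃ x ∈ X, G.Adj v x}

/-- The minimum degree over a set of vertices. -/
noncomputable def minDeg (G : SimpleGraph V) (X : Set V) : ℕ :=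
  sInf ((fun v => deg G v) '' X)

/-- The number of edges of `G` with one endpoint in `X` and the other in `Y`. -/
noncomputable def eBetween (G : SimpleGraph V) (X Y : Set V) : ℕ :=
  {e ∈ G.edgeSet | ∃ x ∈ X, ∃ y ∈ Y, e = s(x, y)}.ncard

/-- The number of edges of `G` with both endpoints in `A`. -/
noncomputable def eIn (G : SimpleGraph V) (A : Set V) : ℕ :=
  {e ∈ G.edgeSet | ∀ v ∈ e, v ∈ A}.ncard

/-- The graph on `V` whose edges are the consecutive pairs of the list `l`;
this lets us view a path, recorded as a list of distinct vertices, as a graph. -/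
def listGraph (l : List V) : SimpleGraph V :=
  SimpleGraph.fromEdgeSet {e | ∃ q ∈ l.zip l.tail, e = s(q.1, q.2)}

/-- `l` is a (nonempty) path on `V` all of whose edges lie in `G`. -/
def IsPathOn (G : SimpleGraph V) (l : List V) : Prop :=
  l ≠ [] ∧ l.Nodup ∧ l.Chain' G.Adj

/-- `l` is a longest path with all edges in `G`. -/
def IsLongestPathOn (G : SimpleGraph V) (l : List V) : Prop :=
  IsPathOn G l ∧ ∀ l' : List V, IsPathOn G l' → l'.length ≤ l.length

/-- `l'` is obtained from the path `l` (with fixed last endpoint) by a single rotation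
within `G`, whose broken edge lies on the original path `P`.  Writing
`l = a :: t₁ ++ c :: b :: t₂`, the pivot is `b`, the new edge is `ab ∈ G`, the broken
edge is `cb` (an edge of `P`), and the rotated path is `(a :: t₁ ++ [c]).reverse ++ b :: t₂`. -/
def IsRotation (G : SimpleGraph V) (P l l' : List V) : Prop :=
  ∃ (a c b : V) (t₁ t₂ : List V),
    l = a :: t₁ ++ c :: b :: t₂ ∧ G.Adj a b ∧ (listGraph P).Adj c b ∧
    l' = (a :: t₁ ++ [c]).reverse ++ b :: t₂

/-- The set of paths obtainable from `P` by at most `t` successive rotations within `G`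
with fixed last endpoint, all broken edges lying on `P`. -/
def rotSet (G : SimpleGraph V) (P : List V) : ℕ → Set (List V)
  | 0 => {P}
  | t + 1 => rotSet G P t ∪ {l' | ∃ l ∈ rotSet G P t, IsRotation G P l l'}

/-- `R^t_{G,P,u}`: the set of endpoints of paths obtainable from `P` by at most `t`
successive rotations within `G` with fixed last endpoint. -/
def Rset (G : SimpleGraph V) (P : List V) (t : ℕ) : Set V :=
  {x | ∃ l ∈ rotSet G P t, l.head? = some x}

/-- The family `H^ε_{n,p}` of Pósa-type subgraphs: there is an ordering of the vertices
with non-increasing degrees such that `d_H(v_i) ≤ (n-i)p - εnp` for all `i < n/2`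
(1-based indexing). -/
def PosaFamily (n : ℕ) (p ε : ℝ) (H : SimpleGraph (Fin n)) : Prop :=
  ∃ v : Fin n → Fin n, Function.Bijective v ∧
    (∀ i j : Fin n, i ≤ j → deg H (v j) ≤ deg H (v i)) ∧
    ∀ i : Fin n, ((i.1 : ℝ) + 1) < n / 2 →
      (deg H (v i) : ℝ) ≤ ((n : ℝ) - ((i.1 : ℝ) + 1)) * p - ε * n * p

/-- The family `H^{ε,δ}_{n,p}` of (shifted) Chvátal-type subgraphs, where the shift
`δn` is recorded as a natural number `s`: there is an ordering of the vertices with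
non-increasing degrees such that for all `i < n/2` (1-based indexing), either
`d_H(v_i) ≤ (n-i)p - εnp` or `d_H(v_{n-i-s}) ≤ ip - εnp`. -/
def ChvatalFamily (n : ℕ) (p ε : ℝ) (s : ℕ) (H : SimpleGraph (Fin n)) : Prop :=
  ∃ v : Fin n → Fin n, Function.Bijective v ∧
    (∀ i j : Fin n, i ≤ j → deg H (v j) ≤ deg H (v i)) ∧
    ∀ i : Fin n, ((i.1 : ℝ) + 1) < n / 2 →
      ((deg H (v i) : ℝ) ≤ ((n : ℝ) - ((i.1 : ℝ) + 1)) * p - ε * n * p ∨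
       (deg H (v ⟨n - (i.1 + 1) - s - 1, by have := i.2; omega⟩) : ℝ) ≤
         ((i.1 : ℝ) + 1) * p - ε * n * p)

/-- The probability weight of a fixed graph `G` in the binomial random graph `G_{n,p}`. -/
noncomputable def weight (n : ℕ) (p : ℝ) (G : SimpleGraph (Fin n)) : ℝ :=
  p ^ G.edgeSet.ncard * (1 - p) ^ (n.choose 2 - G.edgeSet.ncard)

open Classical in
/-- The probability that the binomial random graph `G_{n,p}` satisfies the property `Q`. -/
noncomputable def Pr (n : ℕ) (p : ℝ) (Q : SimpleGraph (Fin n) → Prop) : ℝ :=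
  ∑ G : SimpleGraph (Fin n), if Q G then weight n p G else 0

/-- Property `RE(δ)` for a (connected) graph `G` on `n` vertices: for every path `P`
on the vertex set, either `G ∪ P` has a longer path, or there are at least `δn` vertices
`v`, each with a set `T v` of at least `δn` vertices `w`, such that `G ∪ P` has a path
from `v` to `w` with the same vertex set as `P`. -/
def RE (n : ℕ) (δ : ℝ) (G : SimpleGraph (Fin n)) : Prop :=
  G.Connected ∧
  ∀ P : List (Fin n), P ≠ [] → P.Nodup →
    (∃ Q : List (Fin n), IsPathOn (G ⊔ listGraph P) Q ∧ P.length < Q.length) ∨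
    (∃ S : Set (Fin n), δ * n ≤ S.ncard ∧
      ∃ T : Fin n → Set (Fin n), (∀ v ∈ S, δ * n ≤ (T v).ncard) ∧
        ∀ v ∈ S, ∀ w ∈ T v, ∃ Q : List (Fin n),
          IsPathOn (G ⊔ listGraph P) Q ∧ Q.head? = some v ∧ Q.getLast? = some w ∧
          Q.toFinset = P.toFinset)

/-- `G₂` complements `G₁` (with respect to parameter `δ` as in `RE(δ)`): for every path
`P` on the vertex set, either `G₁ ∪ P` has a longer path, or there are sets `S`, `T v`
as in the definition of `RE(δ)` together with `v ∈ S` and `w ∈ T v` such that `vw` is an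
edge of `G₁ ∪ G₂`. -/
def Complements (n : ℕ) (δ : ℝ) (G₁ G₂ : SimpleGraph (Fin n)) : Prop :=
  ∀ P : List (Fin n), P ≠ [] → P.Nodup →
    (∃ Q : List (Fin n), IsPathOn (G₁ ⊔ listGraph P) Q ∧ P.length < Q.length) ∨
    (∃ S : Set (Fin n), δ * n ≤ S.ncard ∧
      ∃ T : Fin n → Set (Fin n), (∀ v ∈ S, δ * n ≤ (T v).ncard) ∧
        (∀ v ∈ S, ∀ w ∈ T v, ∃ Q : List (Fin n),
          IsPathOn (G₁ ⊔ listGraph P) Q ∧ Q.head? = some v ∧ Q.getLast? = some w ∧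
          Q.toFinset = P.toFinset) ∧
        ∃ v ∈ S, ∃ w ∈ T v, (G₁ ⊔ G₂).Adj v w)

/-! ### Consecutive vertices of a path -/

lemma pair_infix_iff_getElem {l : List V} {x y : V} :
    [x, y] <:+: l ↔ ∃ i, ∃ h : i + 1 < l.length, l[i] = x ∧ l[i + 1] = y := by
  constructor
  · rintro ⟨s, t, rfl⟩
    exact ⟨s.length, by simp, by simp, by simp⟩
  · rintro ⟨i, h, rfl, rfl⟩
    refine ⟨l.take i, l.drop (i + 2), ?_⟩
    rw [List.append_assoc, List.cons_append, List.singleton_append, ← List.drop_eq_getElem_cons,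
      ← List.drop_eq_getElem_cons, List.take_append_drop]

lemma pair_infix_reverse {l : List V} {x y : V} : [x, y] <:+: l.reverse ↔ [y, x] <:+: l := by
  rw [← List.reverse_infix, List.reverse_reverse]
  rfl

lemma triple_infix_reverse {l : List V} {x y z : V} :
    [x, y, z] <:+: l.reverse ↔ [z, y, x] <:+: l := by
  rw [← List.reverse_infix, List.reverse_reverse]
  rfl

lemma left_eq_of_pair_infix {l : List V} (hl : l.Nodup) {x y z : V}
    (hx : [x, z] <:+: l) (hy : [y, z] <:+: l) : x = y := by
  obtain ⟨i, hi, rfl, rfl⟩ := pair_infix_iff_getElem.1 hx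
  obtain ⟨j, hj, rfl, hji⟩ := pair_infix_iff_getElem.1 hy
  have : j + 1 = i + 1 := hl.getElem_inj_iff.1 hji
  simp [Nat.succ_injective this]

lemma right_eq_of_pair_infix {l : List V} (hl : l.Nodup) {x y z : V}
    (hy : [x, y] <:+: l) (hz : [x, z] <:+: l) : y = z :=
  left_eq_of_pair_infix (List.nodup_reverse.2 hl) (pair_infix_reverse.2 hy)
    (pair_infix_reverse.2 hz)

lemma not_pair_infix_swap {l : List V} (hl : l.Nodup) {x y : V} (h : [x, y] <:+: l) :
    ¬ [y, x] <:+: l := by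
  intro h'
  obtain ⟨i, hi, rfl, rfl⟩ := pair_infix_iff_getElem.1 h
  obtain ⟨j, hj, hji, hij⟩ := pair_infix_iff_getElem.1 h'
  have : j = i + 1 := hl.getElem_inj_iff.1 hji
  have : j + 1 = i := hl.getElem_inj_iff.1 hij
  omega

lemma triple_infix_append {s t : List V} {c b x y z : V}
    (h : [x, y, z] <:+: (s ++ [c]) ++ b :: t) (hc : y ≠ c) (hb : y ≠ b) :
    [x, y, z] <:+: s ++ [c] ∨ [x, y, z] <:+: b :: t := by
  rcases List.infix_append_iff.1 h with h | h | ⟨u, v, huv, hu, hv⟩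
  · exact .inl h
  · exact .inr h
  rcases u with _ | ⟨x', _ | ⟨y', _ | ⟨z', u⟩⟩⟩
  · exact .inr (huv ▸ hv.isInfix)
  · obtain ⟨-, rfl⟩ : x = x' ∧ [y, z] = v := by simpa using huv
    exact absurd (List.cons_prefix_cons.1 hv).1 hb
  · obtain ⟨-, rfl, -⟩ : x = x' ∧ y = y' ∧ [z] = v := by simpa using huv
    obtain ⟨r, hr⟩ := hu
    refine absurd ?_ hc
    simpa using congrArg List.getLast? hr
  · obtain ⟨rfl, rfl, rfl, rfl, -⟩ : x = x' ∧ y = y' ∧ z = z' ∧ u = [] ∧ v = [] := by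
      simpa using huv
    exact .inl hu.isInfix

lemma listGraph_adj_of_pair_infix {l : List V} (hl : l.Nodup) {x y : V} (h : [x, y] <:+: l) :
    (listGraph l).Adj x y := by
  refine (SimpleGraph.fromEdgeSet_adj _).2 ⟨⟨(x, y), ?_, rfl⟩, ?_⟩
  · obtain ⟨i, hi, rfl, rfl⟩ := pair_infix_iff_getElem.1 h
    exact List.mem_iff_getElem.2 ⟨i, by simpa [Nat.lt_sub_iff_add_lt] using by omega, by simp⟩
  · simpa using hl.sublist h.sublist

lemma exists_triple_infix_or_eq_head_or_eq_getLast {l : List V} {b : V} (hb : b ∈ l) :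
    (∃ x y, [x, b, y] <:+: l) ∨ l.head? = some b ∨ l.getLast? = some b := by
  obtain ⟨s, t, rfl⟩ := List.append_of_mem hb
  rcases s.eq_nil_or_concat with rfl | ⟨s, x, rfl⟩
  · simp
  rcases t with _ | ⟨y, t⟩
  · simp
  · exact .inl ⟨x, y, s, t, by simp⟩

/-! ### Rotations -/

section Rotation

variable {G H : SimpleGraph V} {P l l' : List V}

lemma IsRotation.perm (h : IsRotation G P l l') : l'.Perm l := by
  obtain ⟨a, c, b, s, t, rfl, -, -, rfl⟩ := h
  simpa using (List.reverse_perm (a :: s ++ [c])).append_right (b :: t)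

lemma IsRotation.isPathOn (hGH : G ≤ H) (h : IsRotation G P l l') (hl : IsPathOn H l) :
    IsPathOn H l' := by
  have hperm := h.perm
  obtain ⟨a, c, b, s, t, rfl, hab, -, rfl⟩ := h
  obtain ⟨-, hnodup, (hchain : List.IsChain H.Adj _)⟩ := hl
  refine ⟨by simp, hperm.nodup_iff.2 hnodup, ?_⟩
  rw [List.append_cons] at hchain
  obtain ⟨hleft, hright, -⟩ := List.isChain_append.1 hchain
  refine List.isChain_append.2 ⟨?_, hright, ?_⟩
  · exact List.isChain_reverse.2 (hleft.imp fun _ _ hxy => hxy.symm)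
  · intro x hx y hy
    obtain rfl : a = x := by
      rw [List.getLast?_reverse] at hx
      simpa using hx
    obtain rfl : b = y := by simpa using hy
    exact hGH hab

lemma rotSet_mono (G : SimpleGraph V) (P : List V) : Monotone (rotSet G P) :=
  monotone_nat_of_le_succ fun _ => Set.subset_union_left

lemma perm_of_mem_rotSet {t : ℕ} (hl : l ∈ rotSet G P t) : l.Perm P := by
  induction t generalizing l with
  | zero => exact hl ▸ List.Perm.refl P
  | succ t ih =>
    rcases hl with hl | ⟨l₀, hl₀, hrot⟩
    · exact ih hl
    · exact hrot.perm.trans (ih hl₀)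

lemma isPathOn_of_mem_rotSet (hGH : G ≤ H) (hP : IsPathOn H P) {t : ℕ} (hl : l ∈ rotSet G P t) :
    IsPathOn H l := by
  induction t generalizing l with
  | zero => exact hl ▸ hP
  | succ t ih =>
    rcases hl with hl | ⟨l₀, hl₀, hrot⟩
    · exact ih hl
    · exact hrot.isPathOn hGH (ih hl₀)

lemma isLongestPathOn_of_mem_rotSet (hGH : G ≤ H) (hP : IsLongestPathOn H P) {t : ℕ}
    (hl : l ∈ rotSet G P t) : IsLongestPathOn H l :=
  ⟨isPathOn_of_mem_rotSet hGH hP.1 hl,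
    fun Q hQ => (perm_of_mem_rotSet hl).length_eq ▸ hP.2 Q hQ⟩

lemma IsLongestPathOn.mem_of_adj_head (hl : IsLongestPathOn H l) {a b : V}
    (ha : l.head? = some a) (hab : H.Adj a b) : b ∈ l := by
  by_contra hb
  have hpath : IsPathOn H (b :: l) := by
    refine ⟨by simp, List.nodup_cons.2 ⟨hb, hl.1.2.1⟩, List.isChain_cons.2 ⟨?_, hl.1.2.2⟩⟩
    intro y hy
    obtain rfl : a = y := by simpa [ha] using hy
    exact hab.symm
  simpa using hl.2 _ hpath

/-- The set `R_{G,P,u}(A)`, where `Pa a` is the path `P_a` chosen for the endpoint `a ∈ A`. -/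
def rotEndpoints (G : SimpleGraph V) (P : List V) (A : Set V) (Pa : V → List V) : Set V :=
  A ∪ {x | ∃ a ∈ A, ∃ l' : List V, IsRotation G P (Pa a) l' ∧ l'.head? = some x}

lemma mem_rotEndpoints_of_pair_infix {A : Set V} {Pa : V → List V} (hP : P.Nodup) {a b c : V}
    (ha : a ∈ A) (hhead : (Pa a).head? = some a) (hab : G.Adj a b) (hcb : [c, b] <:+: Pa a)
    (hP' : [c, b] <:+: P ∨ [c, b] <:+: P.reverse) : c ∈ rotEndpoints G P A Pa := by
  have hadj : (listGraph P).Adj c b := hP'.elim (listGraph_adj_of_pair_infix hP)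
    fun h => (listGraph_adj_of_pair_infix hP (pair_infix_reverse.1 h)).symm
  obtain ⟨s, t, hst⟩ := hcb
  rw [← hst] at hhead
  rcases s with _ | ⟨a', s⟩
  · obtain rfl : c = a := by simpa using hhead
    exact .inl ha
  · obtain rfl : a' = a := by simpa using hhead
    exact .inr ⟨a', ha, _, ⟨a', c, b, s, t, by simp [← hst], hab, hadj, rfl⟩, by simp⟩

end Rotation

/-! ### Vertices passed in the same direction by two paths -/

section Agree

/-- Both lists contain `b` together with a predecessor and a successor, and these are the same in
both. Agreement with `P.reverse` says that `l` passes `b` along `P`, but in the opposite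
direction. -/
def AgreeAt (P l : List V) (b : V) : Prop := ∃ x y, [x, b, y] <:+: P ∧ [x, b, y] <:+: l

variable {P l l' : List V} {b c x y : V}

lemma AgreeAt.exists_pred (h : AgreeAt P l b) : ∃ c, [c, b] <:+: P ∧ [c, b] <:+: l := by
  obtain ⟨x, y, hP, hl⟩ := h
  have hpair : [x, b] <:+: [x, b, y] := ⟨[], [y], rfl⟩
  exact ⟨x, hpair.trans hP, hpair.trans hl⟩

lemma AgreeAt.pair_infix_of_left (hP : P.Nodup) (h : AgreeAt P l b) (hc : [c, b] <:+: P) :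
    [c, b] <:+: l := by
  obtain ⟨x, hxP, hxl⟩ := h.exists_pred
  rwa [left_eq_of_pair_infix hP hc hxP]

lemma AgreeAt.reverse (h : AgreeAt P l b) : AgreeAt P.reverse l.reverse b := by
  obtain ⟨x, y, hP, hl⟩ := h
  exact ⟨y, x, triple_infix_reverse.2 hP, triple_infix_reverse.2 hl⟩

lemma AgreeAt.pair_infix_of_right (hP : P.Nodup) (h : AgreeAt P l b) (hc : [b, c] <:+: P) :
    [b, c] <:+: l :=
  pair_infix_reverse.1 <|
    h.reverse.pair_infix_of_left (List.nodup_reverse.2 hP) (pair_infix_reverse.2 hc)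

/-- `l` passes `b` along `P`, in one of the two directions. -/
def FollowsAt (P l : List V) (b : V) : Prop := AgreeAt P l b ∨ AgreeAt P.reverse l b

lemma agreeAt_iff_of_pair_infix (hP : P.Nodup) (hl : l.Nodup) (hx : FollowsAt P l x)
    (hy : FollowsAt P l y) (hxy : [x, y] <:+: P) : AgreeAt P l x ↔ AgreeAt P l y := by
  have hP' := List.nodup_reverse.2 hP
  have hyx := pair_infix_reverse.2 hxy
  constructor
  · intro h
    refine hy.resolve_right fun h' => ?_
    exact not_pair_infix_swap hl (h.pair_infix_of_right hP hxy) (h'.pair_infix_of_right hP' hyx)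
  · intro h
    refine hx.resolve_right fun h' => ?_
    exact not_pair_infix_swap hl (h.pair_infix_of_left hP hxy) (h'.pair_infix_of_left hP' hyx)

lemma FollowsAt.rotate {s t : List V} {z : V} (h : FollowsAt P ((s ++ [c]) ++ b :: t) z)
    (hc : z ≠ c) (hb : z ≠ b) : FollowsAt P ((s ++ [c]).reverse ++ b :: t) z := by
  have agree {Q : List V} (h : AgreeAt Q ((s ++ [c]) ++ b :: t) z) :
      FollowsAt Q ((s ++ [c]).reverse ++ b :: t) z := by
    obtain ⟨x, y, hQ, hl⟩ := h
    rcases triple_infix_append hl hc hb with hs | ht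
    · exact .inr ⟨y, x, triple_infix_reverse.2 hQ,
        (triple_infix_reverse.2 hs).trans List.infix_append_left⟩
    · exact .inl ⟨x, y, hQ, ht.trans List.infix_append_right⟩
  rcases h with h | h
  · exact agree h
  · simpa [FollowsAt, or_comm] using agree h

variable [DecidableEq V]

open Classical in
/-- The vertices of `P` at which `l` leaves `P`; the two ends of `P` are always among them. -/
noncomputable def deviations (P l : List V) : Finset V := {b ∈ P.toFinset | ¬ FollowsAt P l b}

lemma card_deviations_self_le (P : List V) : (deviations P P).card ≤ 2 := by
  have hsub : deviations P P ⊆ P.head?.toFinset ∪ P.getLast?.toFinset := by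
    intro b hb
    obtain ⟨hbP, hdev⟩ : b ∈ P ∧ ¬ FollowsAt P P b := by simpa [deviations] using hb
    rcases exists_triple_infix_or_eq_head_or_eq_getLast hbP with ⟨x, y, h⟩ | h | h
    · exact absurd (.inl ⟨x, y, h, h⟩) hdev
    · simp [h]
    · simp [h]
  have hcard (o : Option V) : o.toFinset.card ≤ 1 := by cases o <;> simp
  exact (Finset.card_le_card hsub).trans <|
    (Finset.card_union_le _ _).trans (add_le_add (hcard _) (hcard _))

lemma IsRotation.card_deviations_le {G : SimpleGraph V} {Q : List V} (h : IsRotation G Q l l') :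
    (deviations P l').card ≤ (deviations P l).card + 2 := by
  obtain ⟨a, c, b, s, t, rfl, -, -, rfl⟩ := h
  have hsub : deviations P ((a :: s ++ [c]).reverse ++ b :: t) ⊆
      deviations P (a :: s ++ c :: b :: t) ∪ {c, b} := by
    intro z hz
    by_contra hcon
    simp only [deviations, Finset.mem_filter, Finset.mem_union, Finset.mem_insert,
      Finset.mem_singleton, not_or, not_and, not_not] at hz hcon
    refine hz.2 (FollowsAt.rotate ?_ hcon.2.1 hcon.2.2)
    simpa using hcon.1 hz.1
  exact (Finset.card_le_card hsub).trans <|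
    (Finset.card_union_le _ _).trans (Nat.add_le_add_left Finset.card_le_two _)

lemma card_deviations_le_of_mem_rotSet {G : SimpleGraph V} {t : ℕ} (hl : l ∈ rotSet G P t) :
    (deviations P l).card ≤ 2 * (t + 1) := by
  induction t generalizing l with
  | zero => exact hl ▸ card_deviations_self_le P
  | succ t ih =>
    rcases hl with hl | ⟨l₀, hl₀, hrot⟩
    · exact (ih hl).trans (by omega)
    · exact hrot.card_deviations_le.trans (by have := ih hl₀; omega)

end Agree

/-! ### Blocks of consecutive vertices -/

section Block

variable {P l : List V}

lemma agreeAt_getElem_iff (hP : P.Nodup) (hl : l.Nodup) {i j : ℕ} (hij : i ≤ j)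
    (hj : j < P.length) (h : ∀ k, ∀ hk : k < P.length, i ≤ k → k ≤ j → FollowsAt P l P[k]) :
    AgreeAt P l P[i] ↔ AgreeAt P l P[j] := by
  induction j, hij using Nat.le_induction with
  | base => rfl
  | succ j hij ih =>
    rw [ih (by omega) fun k hk hik hkj => h k hk hik (by omega)]
    exact agreeAt_iff_of_pair_infix hP hl (h j _ hij (by omega)) (h (j + 1) _ (by omega) le_rfl)
      (pair_infix_iff_getElem.2 ⟨j, hj, rfl, rfl⟩)

variable [DecidableEq V] {m : ℕ}

lemma agreeAt_iff_of_idxOf_div_eq (hP : P.Nodup) (hl : l.Nodup) {j : ℕ}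
    (h : ∀ b ∈ P, P.idxOf b / m = j → FollowsAt P l b) {x y : V} (hx : x ∈ P) (hy : y ∈ P)
    (hxj : P.idxOf x / m = j) (hyj : P.idxOf y / m = j) : AgreeAt P l x ↔ AgreeAt P l y := by
  wlog hxy : P.idxOf x ≤ P.idxOf y generalizing x y
  · exact (this hy hx hyj hxj (le_of_not_ge hxy)).symm
  have := agreeAt_getElem_iff hP hl hxy (List.idxOf_lt_length_of_mem hy) fun k hk hxk hky => by
    refine h _ (List.getElem_mem hk) ?_
    rw [hP.idxOf_getElem]
    exact le_antisymm (hyj ▸ Nat.div_le_div_right hky) (hxj ▸ Nat.div_le_div_right hxk)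
  simpa using this

open Classical in
/-- How `l` passes the `j`-th block of `P`, a block being formed by `m` consecutive vertices:
`0` if along `P`, `1` if against `P`, and `2` if neither. -/
noncomputable def blockType (P l : List V) (m j : ℕ) : Fin 3 :=
  if ∀ b ∈ P, P.idxOf b / m = j → AgreeAt P l b then 0
  else if ∀ b ∈ P, P.idxOf b / m = j → AgreeAt P.reverse l b then 1
  else 2

lemma exists_mem_deviations_of_blockType_eq_two (hP : P.Nodup) (hl : l.Nodup) {j : ℕ}
    (h : blockType P l m j = 2) : ∃ b ∈ deviations P l, P.idxOf b / m = j := by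
  by_contra! hdev
  have hfollow : ∀ b ∈ P, P.idxOf b / m = j → FollowsAt P l b := fun b hb hbj => by
    by_contra hb'
    exact hdev b (by simp [deviations, hb, hb']) hbj
  unfold blockType at h
  split_ifs at h with h₀ h₁
  · exact absurd h (by decide)
  · exact absurd h (by decide)
  · push Not at h₀
    obtain ⟨x, hx, hxj, hxP⟩ := h₀
    refine h₁ fun b hb hbj => (hfollow b hb hbj).resolve_left ?_
    rwa [agreeAt_iff_of_idxOf_div_eq hP hl hfollow hb hx hbj hxj]

/-- The successors along `l` of the vertices in `W`. -/
noncomputable def succs (l : List V) (W : Finset V) : Finset V :=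
  open Classical in {b ∈ l.toFinset | ∃ c ∈ W, [c, b] <:+: l}

lemma mem_succs {W : Finset V} {b : V} : b ∈ succs l W ↔ ∃ c ∈ W, [c, b] <:+: l := by
  simp only [succs, Finset.mem_filter, List.mem_toFinset, and_iff_right_iff_imp]
  rintro ⟨c, -, h⟩
  exact h.mem (by simp)

lemma card_succs_le (hl : l.Nodup) (W : Finset V) : (succs l W).card ≤ W.card := by
  choose! pred hpred using fun b (hb : b ∈ succs l W) => mem_succs.1 hb
  refine Finset.card_le_card_of_injOn pred (fun b hb => (hpred b hb).1) fun b hb b' hb' h => ?_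
  exact right_eq_of_pair_infix hl (hpred b hb).2 (h ▸ (hpred b' hb').2)

/-- The vertices, in a block of the given type, that may have a predecessor in `W` on the path
passing the block. -/
noncomputable def candidates (P : List V) (W : Finset V) : Fin 3 → Finset V :=
  ![succs P W, succs P.reverse W, P.toFinset]

lemma mem_candidates {W : Finset V} {b : V} (hb : b ∈ P)
    (hW : ∀ c, [c, b] <:+: l → ([c, b] <:+: P ∨ [c, b] <:+: P.reverse) → c ∈ W) :
    b ∈ candidates P W (blockType P l m (P.idxOf b / m)) := by
  unfold blockType
  split_ifs with h₀ h₁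
  · obtain ⟨c, hcP, hcl⟩ := (h₀ b hb rfl).exists_pred
    exact mem_succs.2 ⟨c, hW c hcl (.inl hcP), hcP⟩
  · obtain ⟨c, hcP, hcl⟩ := (h₁ b hb rfl).exists_pred
    exact mem_succs.2 ⟨c, hW c hcl (.inr hcP), hcP⟩
  · exact List.mem_toFinset.2 hb

lemma mem_of_mem_candidates {W : Finset V} {τ : Fin 3} {b : V} (hb : b ∈ candidates P W τ) :
    b ∈ P := by
  fin_cases τ
  · exact List.mem_toFinset.1 (Finset.filter_subset _ _ hb)
  · exact List.mem_reverse.1 (List.mem_toFinset.1 (Finset.filter_subset _ _ hb))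
  · exact List.mem_toFinset.1 hb

lemma mem_succs_of_mem_candidates (hP : P.Nodup) {W : Finset V} {b : V}
    (hb : b ∈ candidates P W (blockType P l m (P.idxOf b / m)))
    (htwo : blockType P l m (P.idxOf b / m) ≠ 2) : b ∈ succs l W := by
  have hbP := mem_of_mem_candidates hb
  unfold blockType at hb htwo
  split_ifs at hb htwo with h₀ h₁
  · obtain ⟨c, hc, hcb⟩ := mem_succs.1 hb
    exact mem_succs.2 ⟨c, hc, (h₀ b hbP rfl).pair_infix_of_left hP hcb⟩
  · obtain ⟨c, hc, hcb⟩ := mem_succs.1 hb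
    exact mem_succs.2 ⟨c, hc, (h₁ b hbP rfl).pair_infix_of_left (List.nodup_reverse.2 hP) hcb⟩
  · exact absurd rfl htwo

lemma card_filter_idxOf_div_eq_le (P : List V) (hm : 0 < m) (j : ℕ) :
    (P.toFinset.filter fun b => P.idxOf b / m = j).card ≤ m := by
  refine (Finset.card_le_card_of_injOn (fun b => P.idxOf b % m) (t := Finset.range m)
    (fun b _ => by simpa using Nat.mod_lt _ hm) fun b hb b' hb' h => ?_).trans_eq
      (Finset.card_range m)
  simp only [Finset.coe_filter, List.mem_toFinset, Set.mem_ofPred_eq] at hb hb'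
  refine (List.idxOf_inj hb.1).1 ?_
  rw [← Nat.div_add_mod (P.idxOf b) m, ← Nat.div_add_mod (P.idxOf b') m, hb.2, hb'.2]
  exact congrArg _ h

lemma card_blockType_eq_two_le (hP : P.Nodup) (hl : l.Nodup) (hm : 0 < m) :
    (P.toFinset.filter fun b => blockType P l m (P.idxOf b / m) = 2).card ≤
      m * (deviations P l).card := by
  refine (Finset.card_le_mul_card_image_of_maps_to (f := fun b => P.idxOf b / m)
    (t := (deviations P l).image fun b => P.idxOf b / m) (fun b hb => ?_) m fun j _ => ?_).trans
      (Nat.mul_le_mul_left _ Finset.card_image_le)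
  · exact Finset.mem_image.2
      (exists_mem_deviations_of_blockType_eq_two hP hl (Finset.mem_filter.1 hb).2)
  · exact (Finset.card_le_card (Finset.filter_subset_filter _ (Finset.filter_subset _ _))).trans
      (card_filter_idxOf_div_eq_le P hm j)

lemma card_candidates_le [Fintype V] (hP : P.Nodup) (hl : l.Nodup) (hm : 0 < m) (W : Finset V) :
    (Finset.univ.filter fun b => b ∈ candidates P W (blockType P l m (P.idxOf b / m))).card ≤
      W.card + m * (deviations P l).card := by
  refine (Finset.card_le_card (t := succs l W ∪
    P.toFinset.filter fun b => blockType P l m (P.idxOf b / m) = 2) fun b hb => ?_).trans <|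
    (Finset.card_union_le _ _).trans <|
      add_le_add (card_succs_le hl W) (card_blockType_eq_two_le hP hl hm)
  have hb := (Finset.mem_filter.1 hb).2
  by_cases htwo : blockType P l m (P.idxOf b / m) = 2
  · simp [htwo, mem_of_mem_candidates hb]
  · simp [mem_succs_of_mem_candidates hP hb htwo]

end Block

/-! ### A small family of sets of pairs -/

section Family

variable [Fintype V] [DecidableEq V]

/-- The pairs `(a, b)` with `a ∈ A` for which `b` is admissible for `a`: the vertices are divided
into `k` blocks by `f`, the block `j` has type `τ a j` for `a`, and `C` lists the vertices that are
admissible in blocks of a given type. -/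
def blockPairs {k : ℕ} (A : Finset V) (f : V → Fin k) (τ : V → Fin k → Fin 3)
    (C : Fin 3 → Finset V) : Finset (V × V) :=
  {q | q.1 ∈ A ∧ q.2 ∈ C (τ q.1 (f q.2))}

/-- All sets `blockPairs A f τ C` with `k` blocks. -/
def blockFamily (V : Type*) [Fintype V] [DecidableEq V] (k : ℕ) : Finset (Finset (V × V)) :=
  Finset.univ.image fun x :
    Finset V × (V → Fin k) × (V → Fin k → Fin 3) × (Fin 3 → Finset V) =>
      blockPairs x.1 x.2.1 x.2.2.1 x.2.2.2

lemma card_blockFamily_le {k : ℕ} (hk : 0 < k) :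
    (blockFamily V k).card ≤ 2 ^ (7 * k * Fintype.card V) := by
  have hbase : 2 * (k * (3 ^ k * 2 ^ 3)) ≤ 2 ^ (7 * k) :=
    calc 2 * (k * (3 ^ k * 2 ^ 3)) = k * 3 ^ k * 2 ^ 4 := by ring
      _ ≤ 2 ^ k * (2 ^ 2) ^ k * (2 ^ 4) ^ k := by
        refine Nat.mul_le_mul (Nat.mul_le_mul ?_ (Nat.pow_le_pow_left (by norm_num) k)) ?_
        · exact Nat.lt_two_pow_self.le
        · exact Nat.le_self_pow hk.ne' _
      _ = 2 ^ (7 * k) := by rw [← pow_mul, ← pow_mul, ← pow_add, ← pow_add]; ring_nf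
  calc (blockFamily V k).card ≤ _ := Finset.card_image_le
    _ = (2 * (k * (3 ^ k * 2 ^ 3))) ^ Fintype.card V := by
      simp only [Finset.card_univ, Fintype.card_prod, Fintype.card_finset, Fintype.card_fun,
        Fintype.card_fin, pow_right_comm 2 (Fintype.card V) 3, ← mul_pow]
    _ ≤ (2 ^ (7 * k)) ^ Fintype.card V := Nat.pow_le_pow_left hbase _
    _ = 2 ^ (7 * k * Fintype.card V) := (pow_mul ..).symm

lemma card_blockPairs_le {k r : ℕ} {A : Finset V} {f : V → Fin k} {τ : V → Fin k → Fin 3}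
    {C : Fin 3 → Finset V}
    (h : ∀ a ∈ A, (Finset.univ.filter fun b => b ∈ C (τ a (f b))).card ≤ r) :
    (blockPairs A f τ C).card ≤ A.card * r := by
  have hsub : blockPairs A f τ C ⊆ A.biUnion fun a =>
      (Finset.univ.filter fun b => b ∈ C (τ a (f b))).image (Prod.mk a) := by
    rintro ⟨a, b⟩ hab
    simpa [blockPairs] using hab
  exact (Finset.card_le_card hsub).trans <|
    Finset.card_biUnion_le_card_mul _ _ _ fun a ha => Finset.card_image_le.trans (h a ha)

lemma exists_mem_blockFamily {G H : SimpleGraph V} (hGH : G ≤ H) {P : List V}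
    (hP : IsLongestPathOn H P) {A : Finset V} {Pa : V → List V} {t : ℕ}
    (hPa : ∀ a ∈ A, (Pa a).head? = some a ∧ Pa a ∈ rotSet G P t) {k : ℕ} (hk : 0 < k) :
    ∃ S ∈ blockFamily V k, (∀ a ∈ A, ∀ b, G.Adj a b → (a, b) ∈ S) ∧
      S.card ≤ A.card *
        ((rotEndpoints G P A Pa).ncard + (Fintype.card V / k + 1) * (2 * (t + 1))) := by
  classical
  have hPnodup := hP.1.2.1
  set m := Fintype.card V / k + 1
  set W := (rotEndpoints G P A Pa).toFinset
  have hidx (b : V) : P.idxOf b / m < k := by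
    refine Nat.div_lt_of_lt_mul (mul_comm k m ▸ lt_of_le_of_lt ?_ (Nat.lt_mul_div_succ _ hk))
    exact List.idxOf_le_length.trans hPnodup.length_le_card
  refine ⟨blockPairs A (fun b => ⟨P.idxOf b / m, hidx b⟩) (fun a j => blockType P (Pa a) m j)
    (candidates P W), Finset.mem_image.2 ⟨(_, _, _, _), Finset.mem_univ _, rfl⟩, ?_, ?_⟩
  · intro a ha b hab
    obtain ⟨hhead, hrot⟩ := hPa a ha
    have hb : b ∈ Pa a :=
      (isLongestPathOn_of_mem_rotSet hGH hP hrot).mem_of_adj_head hhead (hGH hab)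
    simp only [blockPairs, Finset.mem_filter, Finset.mem_univ, true_and]
    exact ⟨ha, mem_candidates ((perm_of_mem_rotSet hrot).mem_iff.1 hb) fun c hc hcP =>
      Set.mem_toFinset.2 (mem_rotEndpoints_of_pair_infix hPnodup ha hhead hab hc hcP)⟩
  · refine card_blockPairs_le fun a ha => ?_
    have hrot := (hPa a ha).2
    rw [Set.ncard_eq_toFinset_card']
    exact (card_candidates_le hPnodup ((perm_of_mem_rotSet hrot).nodup_iff.2 hPnodup)
      (Nat.succ_pos _) W).trans
        (Nat.add_le_add_left (Nat.mul_le_mul_left _ (card_deviations_le_of_mem_rotSet hrot)) _)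

end Family

/-! ### Counting edges by ordered pairs -/

section PairCount

open Classical in
/-- The number of pairs in `S` that are adjacent in `G`; an edge counts twice if `S` contains both
of its orientations. -/
noncomputable def pairCount (G : SimpleGraph V) (S : Finset (V × V)) : ℕ :=
  (S.filter fun q => G.Adj q.1 q.2).card

/-- The number of orientations of `e` that belong to `S`. -/
def mult [DecidableEq V] (S : Finset (V × V)) (e : Sym2 V) : ℕ :=
  (S.filter fun q => s(q.1, q.2) = e).card

lemma mult_le_two [DecidableEq V] (S : Finset (V × V)) (e : Sym2 V) : mult S e ≤ 2 := by
  induction e with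
  | _ x y =>
    refine (Finset.card_le_card (t := {(x, y), (y, x)}) ?_).trans Finset.card_le_two
    rintro ⟨a, b⟩ h
    simpa [Sym2.eq_iff] using (Finset.mem_filter.1 h).2

lemma sum_mult [DecidableEq V] (S : Finset (V × V)) (E : Finset (Sym2 V)) :
    ∑ e ∈ E, mult S e = (S.filter fun q => s(q.1, q.2) ∈ E).card :=
  Finset.sum_card_fiberwise_eq_card_filter S E fun q => s(q.1, q.2)

lemma pairCount_eq_sum_mult [DecidableEq V] (G : SimpleGraph V) [Fintype G.edgeSet]
    (S : Finset (V × V)) : pairCount G S = ∑ e ∈ G.edgeFinset, mult S e := by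
  rw [sum_mult, pairCount]
  congr 1
  ext
  simp

lemma sum_deg_le_pairCount [Finite V] {G G' : SimpleGraph V} (hG : G' ≤ G) {A : Finset V}
    {S : Finset (V × V)} (hS : ∀ a ∈ A, ∀ b, G'.Adj a b → (a, b) ∈ S) :
    ∑ a ∈ A, deg G' a ≤ pairCount G S := by
  classical
  have := Fintype.ofFinite V
  calc ∑ a ∈ A, deg G' a
      = (A.sigma fun a => G'.neighborFinset a).card := by
        simp [deg, Set.ncard_eq_toFinset_card', SimpleGraph.neighborFinset]
    _ ≤ pairCount G S := by
      refine Finset.card_le_card_of_injOn (fun q => (q.1, q.2)) ?_ ?_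
      · rintro ⟨a, b⟩ h
        have h : a ∈ A ∧ G'.Adj a b := by simpa using h
        simpa using ⟨hS a h.1 b h.2, hG h.2⟩
      · rintro ⟨a, b⟩ - ⟨a', b'⟩ - h
        simpa using h

lemma card_mul_minDeg_le_sum_deg (G : SimpleGraph V) (A : Finset V) :
    A.card * minDeg G A ≤ ∑ a ∈ A, deg G a := by
  rw [← smul_eq_mul]
  exact Finset.card_nsmul_le_sum _ _ _ fun a ha => Nat.sInf_le (Set.mem_image_of_mem _ ha)

end PairCount

/-! ### The binomial random graph -/

section Probability

variable {n : ℕ} {p : ℝ}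

open Classical in
/-- This is the independence of the edge indicators. -/
lemma sum_weight_mul_prod (n : ℕ) (p : ℝ) (x : Sym2 (Fin n) → ℝ) :
    ∑ G : SimpleGraph (Fin n), weight n p G * ∏ e ∈ G.edgeFinset, x e =
      ∏ e ∈ (⊤ : SimpleGraph (Fin n)).edgeFinset, (p * x e + (1 - p)) := by
  rw [Finset.prod_add]
  refine Finset.sum_bij' (fun G _ => G.edgeFinset) (fun s _ => SimpleGraph.fromEdgeSet ↑s)
    (fun G _ => Finset.mem_powerset.2 (SimpleGraph.edgeFinset_mono le_top))
    (fun _ _ => Finset.mem_univ _) (fun G _ => by simp) (fun s hs => ?_) (fun G _ => ?_)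
  · have hs : ∀ e ∈ s, ¬ e.IsDiag := fun e he => by simpa using Finset.mem_powerset.1 hs he
    ext e
    simpa using hs e
  · rw [Finset.prod_mul_distrib, Finset.prod_const, Finset.prod_const,
      Finset.card_sdiff_of_subset (SimpleGraph.edgeFinset_mono le_top),
      SimpleGraph.card_edgeFinset_top_eq_card_choose_two, Fintype.card_fin, weight,
      Set.ncard_eq_toFinset_card', SimpleGraph.edgeFinset]
    ring

lemma sum_weight (n : ℕ) (p : ℝ) : ∑ G : SimpleGraph (Fin n), weight n p G = 1 := by
  simpa using sum_weight_mul_prod n p fun _ => 1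

lemma weight_nonneg (hp : 0 ≤ p) (hp1 : p ≤ 1) (G : SimpleGraph (Fin n)) : 0 ≤ weight n p G := by
  have := sub_nonneg.2 hp1
  unfold weight
  positivity

open Classical in
lemma sum_weight_mul_exp_le (hp : 0 ≤ p) (hp1 : p ≤ 1) {y : Sym2 (Fin n) → ℝ}
    (hy : ∀ e, |y e| ≤ 1) :
    ∑ G : SimpleGraph (Fin n), weight n p G * exp (∑ e ∈ G.edgeFinset, y e) ≤
      exp (p * ∑ e ∈ (⊤ : SimpleGraph (Fin n)).edgeFinset, (y e + y e ^ 2)) := by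
  simp only [exp_sum, Finset.mul_sum]
  rw [sum_weight_mul_prod]
  refine Finset.prod_le_prod (fun e _ => ?_) fun e _ => ?_
  · have := sub_nonneg.2 hp1
    positivity
  · have hexp : exp (y e) - 1 - y e ≤ y e ^ 2 :=
      (le_abs_self _).trans (abs_exp_sub_one_sub_id_le (hy e))
    calc p * exp (y e) + (1 - p) ≤ p * (y e + y e ^ 2) + 1 := by
          linarith [mul_le_mul_of_nonneg_left hexp hp]
      _ ≤ exp (p * (y e + y e ^ 2)) := add_one_le_exp _

lemma Pr_mono (hp : 0 ≤ p) (hp1 : p ≤ 1) {Q Q' : SimpleGraph (Fin n) → Prop}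
    (h : ∀ G, Q G → Q' G) : Pr n p Q ≤ Pr n p Q' := by
  refine Finset.sum_le_sum fun G _ => ?_
  split_ifs with hQ hQ'
  · rfl
  · exact absurd (h G hQ) hQ'
  · exact weight_nonneg hp hp1 G
  · rfl

lemma Pr_not (n : ℕ) (p : ℝ) (Q : SimpleGraph (Fin n) → Prop) :
    Pr n p (fun G => ¬ Q G) = 1 - Pr n p Q := by
  rw [eq_sub_iff_add_eq, ← sum_weight n p, Pr, Pr, ← Finset.sum_add_distrib]
  refine Finset.sum_congr rfl fun G _ => ?_
  by_cases hQ : Q G <;> simp [hQ]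

lemma Pr_exists_le (hp : 0 ≤ p) (hp1 : p ≤ 1) {ι : Type*} (s : Finset ι)
    (Q : ι → SimpleGraph (Fin n) → Prop) :
    Pr n p (fun G => ∃ i ∈ s, Q i G) ≤ ∑ i ∈ s, Pr n p (Q i) := by
  classical
  unfold Pr
  rw [Finset.sum_comm]
  refine Finset.sum_le_sum fun G _ => ?_
  have hterm (i : ι) : 0 ≤ if Q i G then weight n p G else 0 := by
    split_ifs
    exacts [weight_nonneg hp hp1 G, le_rfl]
  split_ifs with h
  · obtain ⟨i, hi, hQ⟩ := h
    simpa [hQ] using Finset.single_le_sum (fun i _ => hterm i) hi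
  · exact Finset.sum_nonneg fun i _ => hterm i

lemma Pr_le_sum_weight_mul (hp : 0 ≤ p) (hp1 : p ≤ 1) {Q : SimpleGraph (Fin n) → Prop}
    {X : SimpleGraph (Fin n) → ℝ} (hX : ∀ G, 0 ≤ X G) (hQ : ∀ G, Q G → 1 ≤ X G) :
    Pr n p Q ≤ ∑ G : SimpleGraph (Fin n), weight n p G * X G := by
  refine Finset.sum_le_sum fun G _ => ?_
  have hw := weight_nonneg hp hp1 G
  split_ifs with h
  · exact le_mul_of_one_le_right hw (hQ G h)
  · exact mul_nonneg hw (hX G)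

lemma sum_weight_mul_exp_pairCount_le (hp : 0 ≤ p) (hp1 : p ≤ 1) (S : Finset (Fin n × Fin n))
    {t : ℝ} (ht : 0 ≤ t) (ht2 : t ≤ 1 / 2) :
    ∑ G : SimpleGraph (Fin n), weight n p G * exp (t * pairCount G S) ≤
      exp (p * (t * S.card + 2 * t ^ 2 * S.card)) := by
  classical
  have hmult (e : Sym2 (Fin n)) : (mult S e : ℝ) ≤ 2 := mod_cast mult_le_two S e
  have hsum : ∑ e ∈ (⊤ : SimpleGraph (Fin n)).edgeFinset, (mult S e : ℝ) ≤ S.card := by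
    rw [← Nat.cast_sum, sum_mult]
    exact_mod_cast Finset.card_filter_le _ _
  simp only [pairCount_eq_sum_mult, Nat.cast_sum, Finset.mul_sum]
  refine (sum_weight_mul_exp_le hp hp1 fun e => ?_).trans
    (exp_le_exp.2 (mul_le_mul_of_nonneg_left ?_ hp))
  · rw [abs_of_nonneg (by positivity)]
    nlinarith [hmult e]
  · calc ∑ e ∈ (⊤ : SimpleGraph (Fin n)).edgeFinset, (t * mult S e + (t * mult S e) ^ 2)
        ≤ ∑ e ∈ (⊤ : SimpleGraph (Fin n)).edgeFinset, (t + 2 * t ^ 2) * mult S e := by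
          refine Finset.sum_le_sum fun e _ => ?_
          have := mul_le_mul_of_nonneg_left (hmult e) (show 0 ≤ t ^ 2 * mult S e by positivity)
          linarith
      _ ≤ (t + 2 * t ^ 2) * S.card := by
          rw [← Finset.mul_sum]
          exact mul_le_mul_of_nonneg_left hsum (by positivity)
      _ = t * S.card + 2 * t ^ 2 * S.card := by ring

lemma Pr_lt_pairCount_le (hp : 0 ≤ p) (hp1 : p ≤ 1) {γ : ℝ} (hγ : 0 ≤ γ) (hγ1 : γ ≤ 1)
    (S : Finset (Fin n × Fin n)) :
    Pr n p (fun G => p * S.card + γ * p * n ^ 2 < pairCount G S) ≤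
      exp (-(γ ^ 2 * p * n ^ 2 / 8)) := by
  have hS : (S.card : ℝ) ≤ n ^ 2 := by
    have := S.card_le_univ
    rw [Fintype.card_prod, Fintype.card_fin, ← sq] at this
    exact_mod_cast this
  set M := p * S.card + γ * p * n ^ 2
  calc Pr n p (fun G => M < pairCount G S)
      ≤ ∑ G : SimpleGraph (Fin n), weight n p G * exp (γ / 4 * (pairCount G S - M)) := by
        refine Pr_le_sum_weight_mul hp hp1 (fun _ => (exp_pos _).le) fun G hG => one_le_exp ?_
        have := sub_pos.2 hG
        positivity
    _ = exp (-(γ / 4 * M)) *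
        ∑ G : SimpleGraph (Fin n), weight n p G * exp (γ / 4 * pairCount G S) := by
        rw [Finset.mul_sum]
        refine Finset.sum_congr rfl fun G _ => ?_
        rw [mul_left_comm, ← exp_add]
        ring_nf
    _ ≤ exp (-(γ / 4 * M)) * exp (p * (γ / 4 * S.card + 2 * (γ / 4) ^ 2 * S.card)) := by
        gcongr
        exact sum_weight_mul_exp_pairCount_le hp hp1 S (by positivity) (by linarith)
    _ ≤ exp (-(γ ^ 2 * p * n ^ 2 / 8)) := by
        rw [← exp_add, exp_le_exp]
        have := mul_le_mul_of_nonneg_left hS (show 0 ≤ γ ^ 2 * p / 8 by positivity)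
        simp only [M]
        linarith

lemma le_Pr_forall_pairCount_le (hp : 0 ≤ p) (hp1 : p ≤ 1) {γ : ℝ} (hγ : 0 ≤ γ) (hγ1 : γ ≤ 1)
    (F : Finset (Finset (Fin n × Fin n))) :
    1 - F.card * exp (-(γ ^ 2 * p * n ^ 2 / 8)) ≤
      Pr n p fun G => ∀ S ∈ F, (pairCount G S : ℝ) ≤ p * S.card + γ * p * n ^ 2 := by
  have hunion := (Pr_exists_le hp hp1 F fun S G =>
    p * S.card + γ * p * n ^ 2 < pairCount G S).trans
      (Finset.sum_le_card_nsmul _ _ _ fun S _ => Pr_lt_pairCount_le hp hp1 hγ hγ1 S)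
  have hnot := Pr_not n p fun G =>
    ∀ S ∈ F, (pairCount G S : ℝ) ≤ p * S.card + γ * p * n ^ 2
  push Not at hnot
  rw [hnot, nsmul_eq_mul] at hunion
  linarith

end Probability

/-! ### Asymptotics -/

section Asymptotics

/-- `G_{n,p}` a.a.s. satisfies `Q n p`, uniformly over all `p ≥ C log n / n`. -/
def AASAbove (C : ℝ) (Q : ∀ n, ℝ → SimpleGraph (Fin n) → Prop) : Prop :=
  ∀ θ : ℝ, 0 < θ → ∀ᶠ n : ℕ in atTop, ∀ p : ℝ, C * log n / n ≤ p → p ≤ 1 →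
    1 - θ ≤ Pr n p (Q n p)

lemma AASAbove.mono {C : ℝ} (hC : 0 < C) {Q Q' : ∀ n, ℝ → SimpleGraph (Fin n) → Prop}
    (hQ : AASAbove C Q) (h : ∀ᶠ n in atTop, ∀ p, 0 < p → ∀ G, Q n p G → Q' n p G) :
    AASAbove C Q' := by
  intro θ hθ
  filter_upwards [hQ θ hθ, h, eventually_gt_atTop 1] with n hQn hn hn1 p hp hp1
  have hlog : 0 < log n := log_pos (mod_cast hn1)
  have hp0 : 0 < p := lt_of_lt_of_le (by positivity) hp
  exact (hQn p hp hp1).trans (Pr_mono hp0.le hp1 (hn p hp0))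

lemma aasAbove_pairCount_le {B γ : ℝ} (hB : 0 ≤ B) (hγ : 0 < γ) (hγ1 : γ ≤ 1)
    {F : ∀ n, Finset (Finset (Fin n × Fin n))}
    (hF : ∀ᶠ n : ℕ in atTop, ((F n).card : ℝ) ≤ exp (B * (n * log n))) :
    AASAbove (8 * (B + 1) / γ ^ 2) fun n p G =>
      ∀ S ∈ F n, (pairCount G S : ℝ) ≤ p * S.card + γ * p * n ^ 2 := by
  intro θ hθ
  have hnlog : Tendsto (fun n : ℕ => (n : ℝ) * log n) atTop atTop :=
    tendsto_natCast_atTop_atTop.atTop_mul_atTop₀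
      (tendsto_log_atTop.comp tendsto_natCast_atTop_atTop)
  have hsmall := (tendsto_exp_neg_atTop_nhds_zero.comp hnlog).eventually_le_const hθ
  filter_upwards [hF, hsmall, eventually_gt_atTop 1] with n hFn hsmall hn p hp hp1
  have hlog : 0 < log n := log_pos (mod_cast hn)
  have hp0 : 0 ≤ p := le_trans (by positivity) hp
  have hexponent : (B + 1) * (n * log n) ≤ γ ^ 2 * p * n ^ 2 / 8 := by
    calc (B + 1) * (n * log n)
        = γ ^ 2 * (8 * (B + 1) / γ ^ 2 * log n / n) * n ^ 2 / 8 := by field_simp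
      _ ≤ γ ^ 2 * p * n ^ 2 / 8 := by gcongr
  have hfail : (F n).card * exp (-(γ ^ 2 * p * n ^ 2 / 8)) ≤ θ :=
    calc (F n).card * exp (-(γ ^ 2 * p * n ^ 2 / 8))
        ≤ exp (B * (n * log n)) * exp (-((B + 1) * (n * log n))) := by gcongr
      _ = exp (-(n * log n)) := by rw [← exp_add]; ring_nf
      _ ≤ θ := hsmall
  exact (sub_le_sub_left hfail 1).trans (le_Pr_forall_pairCount_le hp0 hp1 hγ.le hγ1 _)

lemma eventually_ceil_mul_log_add_one_le {η : ℝ} (hη : 0 ≤ η) :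
    ∀ᶠ n : ℕ in atTop, ((⌈η * log n⌉₊ + 1 : ℕ) : ℝ) ≤ (η + 2) * log n := by
  filter_upwards [(tendsto_log_atTop.comp tendsto_natCast_atTop_atTop).eventually_ge_atTop 1]
    with n hn
  have hn : 1 ≤ log n := hn
  have hceil := (Nat.ceil_lt_add_one (show 0 ≤ η * log n by positivity)).le
  push_cast
  linarith

lemma eventually_log_le_mul {δ : ℝ} (hδ : 0 < δ) : ∀ᶠ n : ℕ in atTop, log n ≤ δ * n := by
  filter_upwards [tendsto_natCast_atTop_atTop.eventually (isLittleO_log_id_atTop.bound hδ)]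
    with n hn
  simpa using (le_abs_self _).trans hn

lemma eventually_card_blockFamily_le {η : ℝ} (hη : 0 ≤ η) {K : ℕ} (hK : 0 < K) :
    ∀ᶠ n : ℕ in atTop, ((blockFamily (Fin n) (K * (⌈η * log n⌉₊ + 1))).card : ℝ) ≤
      exp (7 * K * (η + 2) * (n * log n)) := by
  filter_upwards [eventually_ceil_mul_log_add_one_le hη] with n hn
  have hk : 0 < K * (⌈η * log n⌉₊ + 1) := by positivity
  have htwo : (2 : ℝ) ≤ exp 1 := by linarith [add_one_le_exp (1 : ℝ)]
  calc ((blockFamily (Fin n) (K * (⌈η * log n⌉₊ + 1))).card : ℝ)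
      ≤ 2 ^ (7 * (K * (⌈η * log n⌉₊ + 1)) * n) := by
        exact_mod_cast Fintype.card_fin n ▸ card_blockFamily_le (V := Fin n) hk
    _ ≤ exp 1 ^ (7 * (K * (⌈η * log n⌉₊ + 1)) * n) := by gcongr
    _ = exp (7 * K * n * (⌈η * log n⌉₊ + 1 : ℕ)) := by
        rw [← exp_nat_mul]
        push_cast
        ring_nf
    _ ≤ exp (7 * K * n * ((η + 2) * log n)) := by gcongr
    _ = exp (7 * K * (η + 2) * (n * log n)) := by ring_nf

lemma div_mul_add_one_mul_le (n K s : ℕ) : (n / (K * s) + 1) * (2 * s) ≤ 2 * (n / K) + 2 * s := by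
  have := Nat.div_mul_le_self (n / K) s
  rw [Nat.div_div_eq_div_mul] at this
  linarith

lemma eventually_div_add_one_mul_le {η δ : ℝ} (hη : 0 ≤ η) (hδ : 0 < δ) {K : ℕ} (hK : 4 / δ ≤ K) :
    ∀ᶠ n : ℕ in atTop, (((n / (K * (⌈η * log n⌉₊ + 1)) + 1) * (2 * (⌈η * log n⌉₊ + 1)) : ℕ) : ℝ) ≤
      δ * n := by
  filter_upwards [eventually_ceil_mul_log_add_one_le hη,
    eventually_log_le_mul (δ := δ / (4 * (η + 2))) (by positivity)] with n hceil hlog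
  have hdiv : ((n / K : ℕ) : ℝ) ≤ δ / 4 * n :=
    calc ((n / K : ℕ) : ℝ) ≤ n / K := Nat.cast_div_le
      _ ≤ n / (4 / δ) := by gcongr
      _ = δ / 4 * n := by field_simp
  have hs : ((⌈η * log n⌉₊ + 1 : ℕ) : ℝ) ≤ δ / 4 * n :=
    calc ((⌈η * log n⌉₊ + 1 : ℕ) : ℝ) ≤ (η + 2) * log n := hceil
      _ ≤ (η + 2) * (δ / (4 * (η + 2)) * n) := by gcongr
      _ = δ / 4 * n := by field_simp
  calc _ ≤ ((2 * (n / K) + 2 * (⌈η * log n⌉₊ + 1) : ℕ) : ℝ) :=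
        mod_cast div_mul_add_one_mul_le n K _
    _ = 2 * (n / K : ℕ) + 2 * (⌈η * log n⌉₊ + 1 : ℕ) := by push_cast; rfl
    _ ≤ δ * n := by linarith

end Asymptotics

/-! ### Expansion by one more rotation -/

lemma card_mul_minDeg_le_of_pairCount_le [Fintype V] [DecidableEq V] {k t : ℕ} {p M : ℝ}
    (hp : 0 ≤ p) (hk : 0 < k) {G G' H : SimpleGraph V}
    (hG : ∀ S ∈ blockFamily V k, (pairCount G S : ℝ) ≤ p * S.card + M) (hG' : G' ≤ G)
    (hH : G' ≤ H) {P : List V} (hP : IsLongestPathOn H P) {A : Finset V} {Pa : V → List V}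
    (hPa : ∀ a ∈ A, (Pa a).head? = some a ∧ Pa a ∈ rotSet G' P t) :
    (A.card : ℝ) * minDeg G' A ≤ p * (A.card * ((rotEndpoints G' P A Pa).ncard +
      ((Fintype.card V / k + 1) * (2 * (t + 1)) : ℕ))) + M := by
  obtain ⟨S, hSF, hcover, hScard⟩ := exists_mem_blockFamily hH hP hPa hk
  calc (A.card : ℝ) * minDeg G' A ≤ pairCount G S :=
        mod_cast (card_mul_minDeg_le_sum_deg G' A).trans (sum_deg_le_pairCount hG' hcover)
    _ ≤ p * S.card + M := hG S hSF
    _ ≤ _ := by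
        gcongr
        exact_mod_cast hScard

theorem rotation_expansion_general {ε η : ℝ} (hε : 0 < ε) (hη : 0 ≤ η) :
    ∃ C : ℝ, 0 < C ∧ AASAbove C fun n p G =>
      ∀ G' H : SimpleGraph (Fin n), G' ≤ G → G' ≤ H → ∀ P, IsLongestPathOn H P →
        ∀ A : Set (Fin n), ε * n / 100 ≤ A.ncard → ∀ Pa : Fin n → List (Fin n),
          (∀ a ∈ A, (Pa a).head? = some a ∧ Pa a ∈ rotSet G' P ⌈η * log n⌉₊) →
            p⁻¹ * minDeg G' A - ε * n / 10 ≤ (rotEndpoints G' P A Pa).ncard := by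
  -- Half of the error `ε * n / 10` is spent on the blocks containing a deviation, half on the
  -- fluctuation of the edge counts.
  obtain ⟨K, hK⟩ := exists_nat_ge (4 / (ε / 20))
  have hK0 : (0 : ℝ) < K := lt_of_lt_of_le (by positivity) hK
  set γ := min 1 (ε ^ 2 / 2000)
  have hγ : 0 < γ := lt_min one_pos (by positivity)
  refine ⟨8 * (7 * K * (η + 2) + 1) / γ ^ 2, by positivity,
    (aasAbove_pairCount_le (by positivity) hγ (min_le_left _ _)
      (eventually_card_blockFamily_le hη (mod_cast hK0))).mono (by positivity) ?_⟩
  filter_upwards [eventually_div_add_one_mul_le hη (by positivity) hK, eventually_gt_atTop 0]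
    with n hexcess hn p hp G hG G' H hG' hH P hP A hA Pa hPa
  lift A to Finset (Fin n) using A.toFinite
  rw [Set.ncard_coe_finset] at hA
  have hA0 : (0 : ℝ) < A.card := lt_of_lt_of_le (by positivity) hA
  have hk : 0 < K * (⌈η * log n⌉₊ + 1) := Nat.mul_pos (mod_cast hK0) (Nat.succ_pos _)
  have herror : γ * n ^ 2 ≤ ε * n / 20 * A.card :=
    calc γ * n ^ 2 ≤ ε ^ 2 / 2000 * n ^ 2 := by gcongr; exact min_le_right _ _
      _ = ε * n / 20 * (ε * n / 100) := by ring
      _ ≤ ε * n / 20 * A.card := by gcongr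
  have hcount := card_mul_minDeg_le_of_pairCount_le hp.le hk hG hG' hH hP hPa
  rw [Fintype.card_fin] at hcount
  set R := ((rotEndpoints G' P A Pa).ncard : ℝ)
  suffices h : (A.card : ℝ) * minDeg G' A ≤ A.card * (p * (R + ε * n / 10)) from
    sub_le_iff_le_add.2 ((inv_mul_le_iff₀ hp).2 (le_of_mul_le_mul_left h hA0))
  calc (A.card : ℝ) * minDeg G' A
      ≤ p * (A.card * (R + _)) + γ * p * n ^ 2 := hcount
    _ ≤ p * (A.card * (R + ε / 20 * n)) + p * (ε * n / 20 * A.card) := by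
        rw [mul_comm γ, mul_assoc p γ]
        gcongr
    _ = A.card * (p * (R + ε * n / 10)) := by ring

/-- Lemma 4.2.  For every `0 < ε < 1` there exist `η > 0` and `C > 0`
such that, for `p ≥ C log n / n`, a.a.s. the following holds: for every subgraph
`G' ⊆ G`, every path `P'` on `V`, every longest path `P` in `G' ∪ P'`, every set
`A ⊆ R^{η log n}_{G',P,v_ℓ}` with `|A| ≥ εn/100`, and every fixed choice `Pa` of
minimal-rotation paths `P_a` for `a ∈ A`, we have
`|R_{G',P,v_ℓ}(A)| ≥ p⁻¹ δ_{G'}(A) − εn/10`. -/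
theorem rotation_expansion (ε : ℝ) (hε : 0 < ε) (hε1 : ε < 1) :
    ∃ η : ℝ, 0 < η ∧ ∃ C : ℝ, 0 < C ∧ ∀ θ : ℝ, 0 < θ → ∃ N : ℕ, ∀ n : ℕ, N ≤ n →
      ∀ p : ℝ, C * Real.log n / n ≤ p → p ≤ 1 →
        1 - θ ≤ Pr n p (fun G =>
          ∀ G' : SimpleGraph (Fin n), G' ≤ G →
            ∀ P' P : List (Fin n), P'.Nodup →
              IsLongestPathOn (G' ⊔ listGraph P') P →
              ∀ A : Set (Fin n), A ⊆ Rset G' P ⌈η * Real.log n⌉₊ →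
                ε * n / 100 ≤ (A.ncard : ℝ) →
                ∀ Pa : Fin n → List (Fin n),
                  (∀ a ∈ A, (Pa a).head? = some a ∧
                    ∃ t : ℕ, Pa a ∈ rotSet G' P t ∧ ∀ s : ℕ, a ∈ Rset G' P s → t ≤ s) →
                  p⁻¹ * (minDeg G' A : ℝ) - ε * n / 10 ≤
                    (((A ∪ {x | ∃ a ∈ A, ∃ l' : List (Fin n),
                        IsRotation G' P (Pa a) l' ∧ l'.head? = some x}).ncard : ℝ))) := by
  obtain ⟨C, hC, h⟩ := rotation_expansion_general hε zero_le_one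
  refine ⟨1, one_pos, C, hC, fun θ hθ => eventually_atTop.1 ?_⟩
  refine h.mono hC (Eventually.of_forall fun n p _ G hG => ?_) θ hθ
  intro G' hG' P' P _ hP A hAR hA Pa hPa
  refine hG G' _ hG' le_sup_left P hP A hA Pa fun a ha => ⟨(hPa a ha).1, ?_⟩
  obtain ⟨t, hrot, hmin⟩ := (hPa a ha).2
  exact rotSet_mono G' P (hmin _ (hAR ha)) hrot

end Resilience
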